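/- The FK measure is the unique stationary distribution of the Glauber dynamics. Let (V, E, ends, α) be a finite graph with boundary condition with E nonempty, p ∈ (0,1), q > 0. For e ∈ E let K_e be the heat-bath kernel that, from ω, leaves all edges other than e unchanged and sets e open with probability p if the two endpoints of e are connected in the multigraph on V/α with edge set {e' ≠ e : ω e' = true}, and with probability p' = p/(p+q(1−p)) otherwise. Let K := (1/|E|) ∑_{e∈E} K_e be the kernel that updates a uniformly random edge. Then every probability measure μ on configurations satisfying μK = μ equals φ^α_{G,p,q}. -/

import Mathlib

open scoped Classical

noncomputable section

namespace FKPaper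

variable {V E : Type*}

/-- One-step adjacency between wired vertices through an edge in `F`. -/
def Step (ends : E → Sym2 V) (α : Setoid V) (F : Set E) (x y : Quotient α) : Prop :=
  ∃ e ∈ F, Sym2.map (Quotient.mk α) (ends e) = s(x, y)

/-- Setoid of connected components of the wired multigraph with edge set `F`. -/
def connSetoid (ends : E → Sym2 V) (α : Setoid V) (F : Set E) : Setoid (Quotient α) :=
  Relation.EqvGen.setoid (Step ends α F)

/-- Connectivity in the wired multigraph with edge set `F`. -/
def Conn (ends : E → Sym2 V) (α : Setoid V) (F : Set E) (x y : Quotient α) : Prop :=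
  (connSetoid ends α F).r x y

/-- The two endpoints of `e` are joined in the wired multigraph with edge set `F`. -/
def EndsConn (ends : E → Sym2 V) (α : Setoid V) (F : Set E) (e : E) : Prop :=
  ∀ x y : V, ends e = s(x, y) → Conn ends α F (Quotient.mk α x) (Quotient.mk α y)

/-- Number of connected components `k(ω, α)`. -/
def numComponents (ends : E → Sym2 V) (α : Setoid V) (ω : E → Bool) : ℕ :=
  Nat.card (Quotient (connSetoid ends α {e | ω e = true}))

/-- `p' = p / (p + q (1 - p))`. -/
def pPrime (p q : ℝ) : ℝ := p / (p + q * (1 - p))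

/-- Total mass of a set under a weight function. -/
def massOf {ι : Type*} [Fintype ι] (w : ι → ℝ) (A : Set ι) : ℝ :=
  ∑ x ∈ Finset.univ.filter (· ∈ A), w x

/-- Normalized probability of a set under a weight function. -/
def probOf {ι : Type*} [Fintype ι] (w : ι → ℝ) (A : Set ι) : ℝ :=
  massOf w A / massOf w Set.univ

/-- FK weight of a configuration. -/
def fkWeight [Fintype E] (ends : E → Sym2 V) (α : Setoid V) (p q : ℝ) (ω : E → Bool) : ℝ :=
  p ^ (Finset.univ.filter fun e => ω e = true).card *
    (1 - p) ^ (Finset.univ.filter fun e => ω e = false).card *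
    q ^ numComponents ends α ω

/-- The FK (random cluster) probability measure `φ^α_{G,p,q}`. -/
def fkProb [Fintype E] (ends : E → Sym2 V) (α : Setoid V) (p q : ℝ)
    (A : Set (E → Bool)) : ℝ :=
  probOf (fkWeight ends α p q) A

/-- Inhomogeneous Bernoulli weight. -/
def berWeight [Fintype E] (pe : E → ℝ) (ω : E → Bool) : ℝ :=
  ∏ e, if ω e = true then pe e else 1 - pe e

/-- Inhomogeneous Bernoulli product measure `P_{(p_e)}`. -/
def berProb [Fintype E] (pe : E → ℝ) (A : Set (E → Bool)) : ℝ :=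
  probOf (berWeight pe) A

/-- Increasing sets of configurations. -/
def Increasing (A : Set (E → Bool)) : Prop :=
  ∀ ⦃ω ω' : E → Bool⦄, ω ∈ A → (∀ e, ω e ≤ ω' e) → ω' ∈ A

/-- Stochastic domination `μ ≼ ν`. -/
def StochDom [Fintype E] (μ ν : Set (E → Bool) → ℝ) : Prop :=
  ∀ A : Set (E → Bool), Increasing A → μ A ≤ ν A

/-- `Q_F(e)`: cutsets for `e` included in `F`. -/
def Cutsets (ends : E → Sym2 V) (α : Setoid V) (F : Set E) (e : E) : Set (Set E) :=
  {χ | χ ⊆ F ∧ ¬ EndsConn ends α {e' | e' ∉ χ ∧ e' ≠ e} e}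


/-- Probability that the heat-bath update at `e` opens the edge. -/
def heatBathRate [Fintype E] (ends : E → Sym2 V) (α : Setoid V) (p q : ℝ) (e : E)
    (ω : E → Bool) : ℝ :=
  if EndsConn ends α {e' | e' ≠ e ∧ ω e' = true} e then p else pPrime p q

/-- The heat-bath (Glauber) kernel at edge `e`. -/
def heatBath [Fintype E] (ends : E → Sym2 V) (α : Setoid V) (p q : ℝ) (e : E)
    (ω ω' : E → Bool) : ℝ :=
  if ∀ e' ≠ e, ω' e' = ω e' then
    (if ω' e = true then heatBathRate ends α p q e ω
     else 1 - heatBathRate ends α p q e ω)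
  else 0

/-- The random-scan Glauber kernel: update a uniformly chosen edge. -/
def glauber [Fintype E] (ends : E → Sym2 V) (α : Setoid V) (p q : ℝ)
    (ω ω' : E → Bool) : ℝ :=
  ((Fintype.card E : ℝ))⁻¹ * ∑ e : E, heatBath ends α p q e ω ω'

/-!
The Glauber kernel is reversible with respect to the FK weight `w`: opening an edge whose endpoints
are already connected does not change the number of components, and otherwise lowers it by one,
which is the factor `q` built into `p'`. Hence if `μ` is stationary, the density `μ / w` is
harmonic. The kernel can reach every configuration from every other one by changing the edges one
at a time, so by the maximum principle `μ / w` is constant.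
-/

section MarkovChain

open scoped Matrix

variable {ι R : Type*} [Fintype ι]

/-- The detailed balance equations, expressing that the Markov chain with transition matrix `P` is
reversible with respect to the weight `w`, which need not be normalized. -/
def DetailedBalance [Mul R] (w : ι → R) (P : Matrix ι ι R) : Prop :=
  ∀ i j, w i * P i j = w j * P j i

theorem DetailedBalance.mulVec_div_eq_self [Field R] {w μ : ι → R} {P : Matrix ι ι R}
    (hwP : DetailedBalance w P) (hw : ∀ i, w i ≠ 0) (hμ : μ ᵥ* P = μ) :
    P *ᵥ (μ / w) = μ / w := by
  ext i
  have hflow (j : ι) : P i j * (μ j / w j) = μ j * P j i / w i := by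
    rw [mul_div_assoc', div_eq_div_iff (hw j) (hw i)]
    linear_combination μ j * hwP i j
  calc ∑ j, P i j * (μ j / w j) = ∑ j, μ j * P j i / w i := Finset.sum_congr rfl fun j _ => hflow j
    _ = (μ ᵥ* P) i / w i := (Finset.sum_div _ _ _).symm
    _ = μ i / w i := by rw [hμ]

variable [DecidableEq ι]

theorem eq_of_mulVec_apply_eq_of_pos [Ring R] [LinearOrder R] [IsStrictOrderedRing R]
    {P : Matrix ι ι R} (hP : P ∈ Matrix.rowStochastic R ι) {f : ι → R} {i j : ι}
    (hf : (P *ᵥ f) i = f i) (hmax : ∀ k, f k ≤ f i) (hij : 0 < P i j) : f j = f i := by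
  have hnonneg : ∀ k ∈ Finset.univ, 0 ≤ P i k * (f i - f k) := fun k _ =>
    mul_nonneg (Matrix.nonneg_of_mem_rowStochastic hP) (sub_nonneg.2 (hmax k))
  have hfi : ∑ k, P i k * f k = f i := hf
  have hzero : ∑ k, P i k * (f i - f k) = 0 := by
    simp only [mul_sub, Finset.sum_sub_distrib, ← Finset.sum_mul,
      Matrix.sum_row_of_mem_rowStochastic hP, one_mul, hfi, sub_self]
  have hj := (Finset.sum_eq_zero_iff_of_nonneg hnonneg).1 hzero j (Finset.mem_univ j)
  exact (sub_eq_zero.1 ((mul_eq_zero.1 hj).resolve_left hij.ne')).symm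

theorem eq_of_mulVec_eq_self_of_isIrreducible [Ring R] [LinearOrder R] [IsStrictOrderedRing R]
    {P : Matrix ι ι R} (hP : P ∈ Matrix.rowStochastic R ι) (hirr : P.IsIrreducible) {f : ι → R}
    (hf : P *ᵥ f = f) (i j : ι) : f i = f j := by
  let : Quiver ι := P.toQuiver
  have : Nonempty ι := ⟨i⟩
  obtain ⟨m, hm⟩ := Finite.exists_max f
  suffices h : ∀ k, f k = f m from (h i).trans (h j).symm
  intro k
  obtain ⟨path, -⟩ := hirr.connected m k
  induction path with
  | nil => rfl
  | cons _ edge ih =>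
    exact (eq_of_mulVec_apply_eq_of_pos hP (congrFun hf _) (fun l => ih ▸ hm l) edge.down).trans ih

theorem DetailedBalance.eq_sum_mul_of_vecMul_eq_self [Field R] [LinearOrder R]
    [IsStrictOrderedRing R] {w μ : ι → R} {P : Matrix ι ι R} (hwP : DetailedBalance w P)
    (hw : ∀ i, 0 < w i) (hP : P ∈ Matrix.rowStochastic R ι) (hirr : P.IsIrreducible)
    (hμ : μ ᵥ* P = μ) (i : ι) : μ i = (∑ j, μ j) * (w i / ∑ j, w j) := by
  have hharm := hwP.mulVec_div_eq_self (fun j => (hw j).ne') hμ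
  have hprop (j : ι) : μ j = μ i / w i * w j :=
    (div_eq_iff (hw j).ne').1 (eq_of_mulVec_eq_self_of_isIrreducible hP hirr hharm j i)
  have hsum : ∑ j, μ j = μ i / w i * ∑ j, w j := by
    rw [Finset.mul_sum]
    exact Finset.sum_congr rfl fun j _ => hprop j
  have hwi := (hw i).ne'
  have hpos : 0 < ∑ j, w j := Finset.sum_pos (fun j _ => hw j) ⟨i, Finset.mem_univ i⟩
  rw [hsum]
  field_simp

end MarkovChain

section MergeClasses

variable {X : Type*} {r s : Setoid X} {x y : X}

/-- The equivalence relation obtained from `r` by merging the classes of `x` and `y`, which is the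
effect on connected components of adding an edge between `x` and `y`. It is encoded as the kernel of
the map sending the class of `y` to that of `x`, so that its classes can be counted as a range. -/
def mergeClasses (r : Setoid X) (x y : X) : Setoid X :=
  Setoid.ker (Function.update id (Quotient.mk r y) (Quotient.mk r x) ∘ Quotient.mk r)

theorem mergeClasses_le_iff : mergeClasses r x y ≤ s ↔ r ≤ s ∧ s x y := by
  constructor
  · refine fun h => ⟨fun a b hab => h ?_, h ?_⟩
    · exact congrArg (Function.update id _ _) (Quotient.sound hab)
    · change Function.update id _ _ _ = Function.update id _ _ _
      simp [Function.update_apply]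
  · rintro ⟨hrs, hxy⟩ a b hab
    let π : Quotient r → Quotient s := Quotient.map id hrs
    have hπ (c : Quotient r) :
        π (Function.update id (Quotient.mk r y) (Quotient.mk r x) c) = π c := by
      rcases eq_or_ne c (Quotient.mk r y) with rfl | hc
      · rw [Function.update_self]
        exact Quotient.sound hxy
      · rw [Function.update_of_ne hc, id]
    exact Quotient.exact ((hπ _).symm.trans ((congrArg π hab).trans (hπ _)))

theorem mergeClasses_eq_self (h : r x y) : mergeClasses r x y = r :=
  le_antisymm (mergeClasses_le_iff.2 ⟨le_rfl, h⟩) (mergeClasses_le_iff.1 le_rfl).1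

theorem card_quotient_mergeClasses_add_one [Finite (Quotient r)] (h : ¬ r x y) :
    Nat.card (Quotient (mergeClasses r x y)) + 1 = Nat.card (Quotient r) := by
  have hne : Quotient.mk r x ≠ Quotient.mk r y := fun hxy => h (Quotient.exact hxy)
  have hrange : Set.range (Function.update id (Quotient.mk r y) (Quotient.mk r x) ∘ Quotient.mk r) =
      {Quotient.mk r y}ᶜ := by
    rw [Quotient.mk_surjective.range_comp]
    ext c
    constructor
    · rintro ⟨d, rfl⟩
      rcases eq_or_ne d (Quotient.mk r y) with rfl | hd
      · rwa [Function.update_self]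
      · rwa [Function.update_of_ne hd]
    · exact fun hc => ⟨c, Function.update_of_ne hc _ _⟩
  rw [mergeClasses, Nat.card_congr (Setoid.quotientKerEquivRange _), hrange, Nat.card_coe_set_eq,
    ← Set.ncard_add_ncard_compl {Quotient.mk r y}, Set.ncard_singleton, add_comm]

end MergeClasses

section Connectivity

variable {ends : E → Sym2 V} {α : Setoid V} {F : Set E} {e : E}

theorem connSetoid_le_iff {s : Setoid (Quotient α)} :
    connSetoid ends α F ≤ s ↔ ∀ x y, Step ends α F x y → s x y :=
  ⟨fun h _ _ hxy => h (Relation.EqvGen.rel _ _ hxy), Setoid.eqvGen_le⟩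

theorem connSetoid_insert {x y : V} (he : ends e = s(x, y)) :
    connSetoid ends α (insert e F) =
      mergeClasses (connSetoid ends α F) (Quotient.mk α x) (Quotient.mk α y) := by
  refine eq_of_forall_ge_iff fun s => ?_
  rw [mergeClasses_le_iff, connSetoid_le_iff, connSetoid_le_iff]
  constructor
  · intro h
    refine ⟨fun a b ⟨e', he', hab⟩ => h a b ⟨e', Set.mem_insert_of_mem e he', hab⟩, ?_⟩
    exact h _ _ ⟨e, Set.mem_insert e F, by rw [he, Sym2.map_mk]⟩
  · rintro ⟨hF, hxy⟩ a b ⟨e', rfl | he', hab⟩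
    · rw [he, Sym2.map_mk, Sym2.eq_iff] at hab
      rcases hab with ⟨rfl, rfl⟩ | ⟨rfl, rfl⟩
      exacts [hxy, s.symm hxy]
    · exact hF a b ⟨e', he', hab⟩

theorem endsConn_iff {x y : V} (he : ends e = s(x, y)) :
    EndsConn ends α F e ↔ connSetoid ends α F (Quotient.mk α x) (Quotient.mk α y) := by
  refine ⟨fun h => h x y he, fun h x' y' he' => ?_⟩
  rcases Sym2.eq_iff.1 (he.symm.trans he') with ⟨rfl, rfl⟩ | ⟨rfl, rfl⟩
  exacts [h, (connSetoid ends α F).symm h]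

theorem connSetoid_insert_eq_self (h : EndsConn ends α F e) :
    connSetoid ends α (insert e F) = connSetoid ends α F := by
  obtain ⟨x, y, he⟩ := Sym2.exists.1 ⟨ends e, rfl⟩
  rw [connSetoid_insert he, mergeClasses_eq_self ((endsConn_iff he).1 h)]

theorem card_quotient_connSetoid_insert_add_one [Finite V] (h : ¬ EndsConn ends α F e) :
    Nat.card (Quotient (connSetoid ends α (insert e F))) + 1 =
      Nat.card (Quotient (connSetoid ends α F)) := by
  obtain ⟨x, y, he⟩ := Sym2.exists.1 ⟨ends e, rfl⟩
  rw [connSetoid_insert he, card_quotient_mergeClasses_add_one (mt (endsConn_iff he).2 h)]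

end Connectivity

section Components

variable (ends : E → Sym2 V) (α : Setoid V) (e : E) (ω : E → Bool)

theorem setOf_update_true :
    {e' | Function.update ω e true e' = true} = insert e {e' | e' ≠ e ∧ ω e' = true} := by
  ext e'
  by_cases h : e' = e <;> simp [h]

theorem setOf_update_false :
    {e' | Function.update ω e false e' = true} = {e' | e' ≠ e ∧ ω e' = true} := by
  ext e'
  by_cases h : e' = e <;> simp [h]

variable {ends α e ω}

theorem numComponents_update_true_eq (h : EndsConn ends α {e' | e' ≠ e ∧ ω e' = true} e) :
    numComponents ends α (Function.update ω e true) =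
      numComponents ends α (Function.update ω e false) := by
  rw [numComponents, numComponents, setOf_update_true, setOf_update_false,
    connSetoid_insert_eq_self h]

theorem numComponents_update_true_add_one [Finite V]
    (h : ¬ EndsConn ends α {e' | e' ≠ e ∧ ω e' = true} e) :
    numComponents ends α (Function.update ω e true) + 1 =
      numComponents ends α (Function.update ω e false) := by
  rw [numComponents, numComponents, setOf_update_true, setOf_update_false,
    card_quotient_connSetoid_insert_add_one h]

end Components

section Weights

variable [Fintype E] (ends : E → Sym2 V) (α : Setoid V) (p q : ℝ) (e : E) (ω : E → Bool)

theorem berWeight_update (pe : E → ℝ) (b : Bool) :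
    berWeight pe (Function.update ω e b) = (if b = true then pe e else 1 - pe e) *
      ∏ e' ∈ Finset.univ.erase e, if ω e' = true then pe e' else 1 - pe e' := by
  rw [berWeight, ← Finset.mul_prod_erase _ _ (Finset.mem_univ e), Function.update_self]
  congr 1
  refine Finset.prod_congr rfl fun e' he' => ?_
  rw [Function.update_of_ne (Finset.ne_of_mem_erase he')]

theorem fkWeight_eq_berWeight_mul :
    fkWeight ends α p q ω = berWeight (fun _ => p) ω * q ^ numComponents ends α ω := by
  simp only [fkWeight, berWeight, Finset.prod_ite, Finset.prod_const, Bool.not_eq_true]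

theorem probOf_singleton {ι : Type*} [Fintype ι] (w : ι → ℝ) (i : ι) :
    probOf w {i} = w i / ∑ j, w j := by
  simp [probOf, massOf, Finset.sum_filter]

theorem heatBathRate_update (b : Bool) :
    heatBathRate ends α p q e (Function.update ω e b) = heatBathRate ends α p q e ω := by
  have hset : {e' | e' ≠ e ∧ Function.update ω e b e' = true} = {e' | e' ≠ e ∧ ω e' = true} :=
    Set.ext fun e' => and_congr_right fun he' => by rw [Function.update_of_ne he']
  rw [heatBathRate, heatBathRate, hset]

variable {p q}

theorem fkWeight_pos (hp : p ∈ Set.Ioo 0 1) (hq : 0 < q) : 0 < fkWeight ends α p q ω := by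
  have hp₀ := hp.1
  have hp₁ := sub_pos.2 hp.2
  unfold fkWeight
  positivity

theorem pPrime_mem_Ioo (hp : p ∈ Set.Ioo 0 1) (hq : 0 < q) : pPrime p q ∈ Set.Ioo 0 1 := by
  have hp₀ := hp.1
  have hqp : 0 < q * (1 - p) := mul_pos hq (sub_pos.2 hp.2)
  exact ⟨div_pos hp₀ (by positivity), (div_lt_one (by positivity)).2 (by linarith)⟩

theorem one_sub_pPrime (h : p + q * (1 - p) ≠ 0) :
    1 - pPrime p q = q * (1 - p) / (p + q * (1 - p)) := by
  rw [pPrime, one_sub_div h, add_sub_cancel_left]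

theorem heatBathRate_mem_Ioo (hp : p ∈ Set.Ioo 0 1) (hq : 0 < q) :
    heatBathRate ends α p q e ω ∈ Set.Ioo 0 1 := by
  unfold heatBathRate
  split_ifs
  exacts [hp, pPrime_mem_Ioo hp hq]

theorem fkWeight_update_true_mul_one_sub_heatBathRate [Finite V] (h : p + q * (1 - p) ≠ 0) :
    fkWeight ends α p q (Function.update ω e true) * (1 - heatBathRate ends α p q e ω) =
      fkWeight ends α p q (Function.update ω e false) * heatBathRate ends α p q e ω := by
  simp only [fkWeight_eq_berWeight_mul, berWeight_update, heatBathRate, if_true,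
    Bool.false_eq_true, if_false]
  split_ifs with hconn
  · rw [numComponents_update_true_eq hconn]
    ring
  · rw [← numComponents_update_true_add_one hconn, one_sub_pPrime h, pPrime]
    ring

end Weights

section Glauber

variable [Fintype E] (ends : E → Sym2 V) (α : Setoid V) (p q : ℝ) (e : E) (ω : E → Bool)

theorem heatBath_update_update (b c : Bool) :
    heatBath ends α p q e (Function.update ω e b) (Function.update ω e c) =
      if c = true then heatBathRate ends α p q e ω else 1 - heatBathRate ends α p q e ω := by
  have hoff : ∀ e' ≠ e, Function.update ω e c e' = Function.update ω e b e' := fun e' he' => by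
    rw [Function.update_of_ne he', Function.update_of_ne he']
  rw [heatBath, if_pos hoff, Function.update_self, heatBathRate_update]

theorem heatBath_update (b : Bool) :
    heatBath ends α p q e ω (Function.update ω e b) =
      if b = true then heatBathRate ends α p q e ω else 1 - heatBathRate ends α p q e ω := by
  simpa only [Function.update_eq_self] using heatBath_update_update ends α p q e ω (ω e) b

variable {ends α p q e ω}

theorem heatBath_eq_zero {ω' : E → Bool} (h : ω' ∉ Set.range (Function.update ω e)) :
    heatBath ends α p q e ω ω' = 0 :=
  if_neg fun hoff => h ⟨ω' e, (Function.eq_update_iff.2 ⟨rfl, hoff⟩).symm⟩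

theorem heatBath_nonneg (hp : p ∈ Set.Ioo 0 1) (hq : 0 < q) (ω' : E → Bool) :
    0 ≤ heatBath ends α p q e ω ω' := by
  have hr := heatBathRate_mem_Ioo ends α e ω hp hq
  unfold heatBath
  split_ifs
  exacts [hr.1.le, sub_nonneg.2 hr.2.le, le_rfl]

theorem heatBath_update_pos (hp : p ∈ Set.Ioo 0 1) (hq : 0 < q) (b : Bool) :
    0 < heatBath ends α p q e ω (Function.update ω e b) := by
  have hr := heatBathRate_mem_Ioo ends α e ω hp hq
  rw [heatBath_update]
  split_ifs
  exacts [hr.1, sub_pos.2 hr.2]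

variable (ends α p q e ω)

theorem sum_heatBath : ∑ ω', heatBath ends α p q e ω ω' = 1 := by
  rw [← Fintype.sum_of_injective _ (Function.update_injective ω e) _ _
    (fun _ => heatBath_eq_zero) fun _ => rfl]
  simp [heatBath_update]

variable {p q}

theorem detailedBalance_heatBath [Finite V] (h : p + q * (1 - p) ≠ 0) :
    DetailedBalance (fkWeight ends α p q) (Matrix.of (heatBath ends α p q e)) := by
  intro ω ω'
  by_cases hmem : ω' ∈ Set.range (Function.update ω e)
  · obtain ⟨b, rfl⟩ := hmem
    have hflip := fkWeight_update_true_mul_one_sub_heatBathRate ends α e ω h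
    suffices hbal : ∀ c, fkWeight ends α p q (Function.update ω e c) *
          heatBath ends α p q e (Function.update ω e c) (Function.update ω e b) =
        fkWeight ends α p q (Function.update ω e b) *
          heatBath ends α p q e (Function.update ω e b) (Function.update ω e c) by
      simpa only [Matrix.of_apply, Function.update_eq_self] using hbal (ω e)
    intro c
    cases b <;> cases c <;> simp [heatBath_update_update, hflip]
  · have hmem' : ω ∉ Set.range (Function.update ω' e) := by
      rintro ⟨b, rfl⟩
      exact hmem ⟨ω' e, by rw [Function.update_idem, Function.update_eq_self]⟩
    simp only [Matrix.of_apply, heatBath_eq_zero hmem, heatBath_eq_zero hmem', mul_zero]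

theorem detailedBalance_glauber [Finite V] (h : p + q * (1 - p) ≠ 0) :
    DetailedBalance (fkWeight ends α p q) (Matrix.of (glauber ends α p q)) := by
  intro ω ω'
  simp only [Matrix.of_apply, glauber, mul_left_comm (fkWeight ends α p q _), Finset.mul_sum]
  refine Finset.sum_congr rfl fun e _ => ?_
  exact congrArg (_ * ·) (detailedBalance_heatBath ends α e h ω ω')

theorem glauber_mem_rowStochastic [Nonempty E] (hp : p ∈ Set.Ioo 0 1) (hq : 0 < q) :
    Matrix.of (glauber ends α p q) ∈ Matrix.rowStochastic ℝ (E → Bool) := by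
  refine Matrix.mem_rowStochastic_iff_sum.2 ⟨fun ω ω' => ?_, fun ω => ?_⟩
  · exact mul_nonneg (by positivity) (Finset.sum_nonneg fun e _ => heatBath_nonneg hp hq ω')
  · simp only [Matrix.of_apply, glauber]
    rw [← Finset.mul_sum, Finset.sum_comm]
    simp [sum_heatBath]

theorem glauber_update_pos (hp : p ∈ Set.Ioo 0 1) (hq : 0 < q) (b : Bool) :
    0 < glauber ends α p q ω (Function.update ω e b) := by
  have : Nonempty E := ⟨e⟩
  refine mul_pos (inv_pos.2 (Nat.cast_pos.2 Fintype.card_pos)) ?_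
  exact Finset.sum_pos' (fun _ _ => heatBath_nonneg hp hq _)
    ⟨e, Finset.mem_univ e, heatBath_update_pos hp hq b⟩

theorem glauber_isIrreducible [Nonempty E] (hp : p ∈ Set.Ioo 0 1) (hq : 0 < q) :
    (Matrix.of (glauber ends α p q)).IsIrreducible := by
  refine ⟨fun _ _ => Matrix.nonneg_of_mem_rowStochastic
    (glauber_mem_rowStochastic ends α hp hq), fun ω ω' => ?_⟩
  let : Quiver (E → Bool) := (Matrix.of (glauber ends α p q)).toQuiver
  have hpath (s : Finset E) : Nonempty (Quiver.Path ω (s.piecewise ω' ω)) := by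
    induction s using Finset.induction_on with
    | empty =>
      rw [Finset.piecewise_empty]
      exact ⟨.nil⟩
    | insert e s _ ih =>
      obtain ⟨path⟩ := ih
      rw [Finset.piecewise_insert]
      exact ⟨path.cons ⟨glauber_update_pos ends α e _ hp hq (ω' e)⟩⟩
  obtain ⟨path⟩ := hpath Finset.univ
  rw [Finset.piecewise_univ] at path
  obtain ⟨e⟩ := ‹Nonempty E›
  have hloop := glauber_update_pos ends α e ω' hp hq (ω' e)
  rw [Function.update_eq_self] at hloop
  exact ⟨path.cons ⟨hloop⟩, Nat.succ_pos _⟩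

end Glauber

theorem fk_unique_stationary_glauber_general
    {V E : Type*} [Finite V] [Fintype E] [Nonempty E]
    (ends : E → Sym2 V) (α : Setoid V)
    (p q : ℝ) (hp : p ∈ Set.Ioo (0 : ℝ) 1) (hq : 0 < q)
    (μ : (E → Bool) → ℝ)
    (hstat : ∀ ω' : E → Bool, ∑ ω : E → Bool, μ ω * glauber ends α p q ω ω' = μ ω')
    (ω : E → Bool) : μ ω = (∑ ω', μ ω') * fkProb ends α p q {ω} := by
  have hdenom : p + q * (1 - p) ≠ 0 := (add_pos hp.1 (mul_pos hq (sub_pos.2 hp.2))).ne'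
  rw [fkProb, probOf_singleton]
  exact (detailedBalance_glauber ends α hdenom).eq_sum_mul_of_vecMul_eq_self
    (fkWeight_pos ends α · hp hq) (glauber_mem_rowStochastic ends α hp hq)
    (glauber_isIrreducible ends α hp hq) (funext hstat) ω

/-- **The FK measure is the unique stationary distribution of the Glauber dynamics.** -/
theorem fk_unique_stationary_glauber
    {V E : Type*} [Fintype V] [Fintype E] [Nonempty E]
    (ends : E → Sym2 V) (α : Setoid V)
    (p q : ℝ) (hp : p ∈ Set.Ioo (0 : ℝ) 1) (hq : 0 < q)
    (μ : (E → Bool) → ℝ)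
    (hnonneg : ∀ ω, 0 ≤ μ ω) (hsum : ∑ ω, μ ω = 1)
    (hstat : ∀ ω' : E → Bool, ∑ ω : E → Bool, μ ω * glauber ends α p q ω ω' = μ ω') :
    ∀ ω : E → Bool, μ ω = fkProb ends α p q {ω} := by
  intro ω
  rw [fk_unique_stationary_glauber_general ends α p q hp hq μ hstat ω, hsum, one_mul]

end FKPaper
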